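/- Let φ be Haar-random on the unit sphere of a d-dimensional complex Hilbert space, P an orthogonal projection of rank M, and t ≥ 1 an integer. Then E[‖Pφ‖^{2t}] = [(M+t−1)(M+t−2)⋯M] / [(d+t−1)(d+t−2)⋯d] = C(M+t−1, t)/C(d+t−1, t). -/

import Mathlib

open MeasureTheory
open scoped InnerProductSpace

/-!
A unitarily invariant measure integrates to zero the derivative of any function along a linear
vector field `x ↦ B x` with `B` skew-adjoint. Splitting an arbitrary operator `T` into `T - T†` and
`i (T + T†)` turns this into `∫ ∂f (T x) = ∫ ∂̄f (T† x)`. For `f = g ⟪x, e⟫` and `T = a ⟪e, ·⟫`,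
summing over an orthonormal basis of vectors `e` gives the Stein identity
`d ∫ g ⟪x, a⟫ = ∫ ‖x‖² ∂g (a) - ⟪x, a⟫ ∂̄g (x)`.
For `g = ‖P x‖ ^ (2 * n) ⟪a, x⟫`, summing over an orthonormal basis of vectors `a` of the range of
`P` gives, on the unit sphere, `(d + n) m (n + 1) = (M + n) m n` for the moments `m` of `‖P x‖ ^ 2`.
-/

section CompactlySupportedMeasure

variable {X F : Type*} [TopologicalSpace X] [T2Space X]
  [MeasurableSpace X] [OpensMeasurableSpace X] [NormedAddCommGroup F] {μ : Measure X} {K : Set X}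

theorem integrable_of_continuous_of_ae_mem_isCompact [IsFiniteMeasureOnCompacts μ]
    (hK : IsCompact K) (hμK : ∀ᵐ x ∂μ, x ∈ K) {f : X → F} (hf : Continuous f) :
    Integrable f μ := by
  rw [← Measure.restrict_eq_self_of_ae_mem hμK]
  exact hf.continuousOn.integrableOn_compact hK

theorem hasDerivAt_integral_of_ae_mem_isCompact [IsFiniteMeasure μ] [NormedSpace ℝ F]
    (hK : IsCompact K) (hμK : ∀ᵐ x ∂μ, x ∈ K) {f f' : ℝ → X → F}
    (hf : ∀ θ, Continuous (f θ)) (hf' : Continuous (Function.uncurry f'))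
    (hderiv : ∀ θ x, HasDerivAt (fun θ => f θ x) (f' θ x) θ) (θ₀ : ℝ) :
    HasDerivAt (fun θ => ∫ x, f θ x ∂μ) (∫ x, f' θ₀ x ∂μ) θ₀ := by
  obtain ⟨C, hC⟩ := ((isCompact_Icc (a := θ₀ - 1) (b := θ₀ + 1)).prod
    hK).exists_bound_of_continuousOn hf'.continuousOn
  have hint {g : X → F} (hg : Continuous g) : Integrable g μ :=
    integrable_of_continuous_of_ae_mem_isCompact hK hμK hg
  exact (hasDerivAt_integral_of_dominated_loc_of_deriv_le (bound := fun _ => C)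
    (Icc_mem_nhds (sub_one_lt θ₀) (lt_add_one θ₀))
    (.of_forall fun θ => (hint (hf θ)).aestronglyMeasurable) (hint (hf θ₀))
    (hint (hf'.comp (Continuous.prodMk_right θ₀))).aestronglyMeasurable
    (hμK.mono fun x hx θ hθ => hC (θ, x) ⟨hθ, hx⟩) (integrable_const C)
    (.of_forall fun x θ _ => hderiv θ x)).2

end CompactlySupportedMeasure

section WirtingerDerivative

variable {E : Type*} [NormedAddCommGroup E] [NormedSpace ℂ E]

/-- Wirtinger differentiability: the real differential of `f` at `x` is the sum of the complex
linear functional `L`, which is `∂f`, and the conjugate linear functional `A`, which is `∂̄f`. -/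
def HasWirtingerDerivAt (f : E → ℂ) (L : E →L[ℂ] ℂ) (A : E →L⋆[ℂ] ℂ) (x : E) : Prop :=
  ∃ f' : E →L[ℝ] ℂ, HasFDerivAt f f' x ∧ ∀ v, f' v = L v + A v

namespace HasWirtingerDerivAt

section Pointwise

variable {f g : E → ℂ} {x : E} {L L' : E →L[ℂ] ℂ} {A A' : E →L⋆[ℂ] ℂ}

theorem fderiv_apply (h : HasWirtingerDerivAt f L A x) (v : E) :
    fderiv ℝ f x v = L v + A v := by
  obtain ⟨f', hf', hLA⟩ := h
  rw [hf'.fderiv, hLA]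

theorem linear_apply (h : HasWirtingerDerivAt f L A x) (v : E) :
    L v = (fderiv ℝ f x v - Complex.I * fderiv ℝ f x (Complex.I • v)) / 2 := by
  simp only [h.fderiv_apply, map_smul, map_smulₛₗ, Complex.conj_I, smul_eq_mul]
  linear_combination (L v - A v) / 2 * Complex.I_sq

theorem conjLinear_apply (h : HasWirtingerDerivAt f L A x) (v : E) :
    A v = (fderiv ℝ f x v + Complex.I * fderiv ℝ f x (Complex.I • v)) / 2 := by
  rw [eq_sub_of_add_eq' (h.fderiv_apply v).symm, h.linear_apply]
  ring

theorem mul (hf : HasWirtingerDerivAt f L A x) (hg : HasWirtingerDerivAt g L' A' x) :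
    HasWirtingerDerivAt (fun y => f y * g y) (f x • L' + g x • L) (f x • A' + g x • A) x := by
  obtain ⟨f', hf', hLA⟩ := hf
  obtain ⟨g', hg', hLA'⟩ := hg
  refine ⟨_, hf'.mul hg', fun v => ?_⟩
  simp only [add_apply, smul_apply, hLA, hLA', smul_eq_mul]
  ring

theorem pow (hf : HasWirtingerDerivAt f L A x) (n : ℕ) :
    HasWirtingerDerivAt (fun y => f y ^ n)
      ((n * f x ^ (n - 1)) • L) ((n * f x ^ (n - 1)) • A) x := by
  obtain ⟨f', hf', hLA⟩ := hf
  refine ⟨_, hf'.pow n, fun v => ?_⟩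
  simp only [smul_apply, nsmul_eq_mul, hLA, smul_eq_mul]
  ring

end Pointwise

section Continuity

variable {f : E → ℂ} {L : E → E →L[ℂ] ℂ} {A : E → E →L⋆[ℂ] ℂ} {V : E → E}

theorem continuous_linear_apply (hf : ContDiff ℝ 1 f)
    (hLA : ∀ x, HasWirtingerDerivAt f (L x) (A x) x) (hV : Continuous V) :
    Continuous fun x => L x (V x) := by
  have : Continuous (fderiv ℝ f) := hf.continuous_fderiv one_ne_zero
  simp only [(hLA _).linear_apply]
  fun_prop

theorem continuous_conjLinear_apply (hf : ContDiff ℝ 1 f)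
    (hLA : ∀ x, HasWirtingerDerivAt f (L x) (A x) x) (hV : Continuous V) :
    Continuous fun x => A x (V x) := by
  have : Continuous (fderiv ℝ f) := hf.continuous_fderiv one_ne_zero
  simp only [(hLA _).conjLinear_apply]
  fun_prop

end Continuity

end HasWirtingerDerivAt

end WirtingerDerivative

section WirtingerInner

variable {E F : Type*} [NormedAddCommGroup E] [InnerProductSpace ℂ E]
  [NormedAddCommGroup F] [InnerProductSpace ℂ F]

theorem hasWirtingerDerivAt_inner_right (a x : E) :
    HasWirtingerDerivAt (fun y => ⟪a, y⟫_ℂ) (innerSL ℂ a) 0 x :=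
  ⟨_, ((innerSL ℂ a).hasFDerivAt (x := x)).restrictScalars ℝ, fun v => by simp⟩

theorem hasWirtingerDerivAt_inner_left (a x : E) :
    HasWirtingerDerivAt (fun y => ⟪y, a⟫_ℂ) 0 (innerSLFlip ℂ a) x :=
  ⟨_, (hasFDerivAt_id (𝕜 := ℝ) x).inner ℂ (hasFDerivAt_const a x), fun v => by simp⟩

theorem hasWirtingerDerivAt_norm_sq_map (T : E →L[ℂ] F) (x : E) :
    HasWirtingerDerivAt (fun y => (‖T y‖ ^ 2 : ℂ))
      (innerSL ℂ (T x) ∘L T) ((innerSLFlip ℂ (T x)).comp T) x := by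
  have hT := (T.hasFDerivAt (x := x)).restrictScalars ℝ
  have h := hT.inner ℂ hT
  simp only [inner_self_eq_norm_sq_to_K] at h
  exact ⟨_, h, fun v => by simp⟩

end WirtingerInner

section UnitaryInvariance

variable {E F : Type*} [NormedAddCommGroup E] [InnerProductSpace ℂ E] [CompleteSpace E]
  [MeasurableSpace E] [BorelSpace E] [NormedAddCommGroup F] [NormedSpace ℝ F] {μ : Measure E}

theorem integral_comp_unitary (hinv : ∀ U : E ≃ₗᵢ[ℂ] E, μ.map U = μ) (f : E → F)
    {u : E →L[ℂ] E} (hu : u ∈ unitary (E →L[ℂ] E)) :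
    ∫ x, f (u x) ∂μ = ∫ x, f x ∂μ := by
  let U := Unitary.linearIsometryEquiv ⟨u, hu⟩
  exact MeasurePreserving.integral_comp ⟨U.continuous.measurable, hinv U⟩
    U.toHomeomorph.measurableEmbedding f

variable [IsFiniteMeasure μ] {K : Set E} (hK : IsCompact K) (hμK : ∀ᵐ x ∂μ, x ∈ K)
  (hinv : ∀ U : E ≃ₗᵢ[ℂ] E, μ.map U = μ)

include hK hμK hinv

theorem integral_fderiv_apply_eq_zero_of_mem_skewAdjoint {f : E → F} (hf : ContDiff ℝ 1 f)
    {B : E →L[ℂ] E} (hB : B ∈ skewAdjoint (E →L[ℂ] E)) :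
    ∫ x, fderiv ℝ f x (B x) ∂μ = 0 := by
  let +nondep : NormedAlgebra ℚ (E →L[ℂ] E) := .restrictScalars ℚ ℂ _
  let u : ℝ → E →L[ℂ] E := fun θ => NormedSpace.exp (θ • B)
  have hu_unitary (θ : ℝ) : u θ ∈ unitary (E →L[ℂ] E) :=
    NormedSpace.exp_mem_unitary_of_mem_skewAdjoint (skewAdjoint.smul_mem θ hB)
  have hu_deriv (θ : ℝ) : HasDerivAt u (u θ * B) θ := hasDerivAt_exp_smul_const B θ
  have : Continuous u := continuous_iff_continuousAt.mpr fun θ => (hu_deriv θ).continuousAt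
  have horbit (θ : ℝ) (x : E) : HasDerivAt (fun θ => u θ x) (u θ (B x)) θ :=
    ((ContinuousLinearMap.apply ℂ E x).restrictScalars ℝ).hasFDerivAt.comp_hasDerivAt θ (hu_deriv θ)
  have hf_orbit (θ : ℝ) (x : E) :
      HasDerivAt (fun θ => f (u θ x)) (fderiv ℝ f (u θ x) (u θ (B x))) θ :=
    (hf.differentiable one_ne_zero _).hasFDerivAt.comp_hasDerivAt θ (horbit θ x)
  have : Continuous (fderiv ℝ f) := hf.continuous_fderiv one_ne_zero
  have hderiv := hasDerivAt_integral_of_ae_mem_isCompact hK hμK (fun θ => by fun_prop)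
    (f' := fun θ x => fderiv ℝ f (u θ x) (u θ (B x))) (by fun_prop) hf_orbit 0
  simp only [integral_comp_unitary hinv f (hu_unitary _)] at hderiv
  simpa [u] using hderiv.unique (hasDerivAt_const _ _)

variable {f : E → ℂ} {L : E → E →L[ℂ] ℂ} {A : E → E →L⋆[ℂ] ℂ}

theorem integral_linear_sub_conjLinear_adjoint_eq_zero (hf : ContDiff ℝ 1 f)
    (hLA : ∀ x, HasWirtingerDerivAt f (L x) (A x) x) (T : E →L[ℂ] E) :
    ∫ x, (L x (T x) - A x (star T x)) ∂μ = 0 := by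
  have : Continuous (fderiv ℝ f) := hf.continuous_fderiv one_ne_zero
  have hint (B : E →L[ℂ] E) : Integrable (fun x => fderiv ℝ f x (B x)) μ :=
    integrable_of_continuous_of_ae_mem_isCompact hK hμK (by fun_prop)
  have hskew_sub : T - star T ∈ skewAdjoint (E →L[ℂ] E) := by simp [skewAdjoint.mem_iff]
  have hskew_add : Complex.I • (T + star T) ∈ skewAdjoint (E →L[ℂ] E) :=
    (IsSelfAdjoint.add_star_self T).I_smul_mem_skewAdjoint
  have hsplit (x : E) : L x (T x) - A x (star T x) = 2⁻¹ * fderiv ℝ f x ((T - star T) x)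
      - Complex.I / 2 * fderiv ℝ f x ((Complex.I • (T + star T)) x) := by
    simp only [sub_apply, add_apply,
      smul_apply, (hLA x).fderiv_apply, map_sub, map_add, map_smul, map_smulₛₗ,
      smul_add, smul_eq_mul, Complex.conj_I, neg_mul]
    linear_combination
      (L x (T x) + L x (star T x) - A x (T x) - A x (star T x)) / 2 * Complex.I_sq
  simp only [hsplit]
  rw [integral_sub ((hint _).const_mul _) ((hint _).const_mul _), integral_const_mul,
    integral_const_mul,
    integral_fderiv_apply_eq_zero_of_mem_skewAdjoint hK hμK hinv hf hskew_sub,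
    integral_fderiv_apply_eq_zero_of_mem_skewAdjoint hK hμK hinv hf hskew_add,
    mul_zero, mul_zero, sub_zero]

theorem integral_linear_rankOne_sub_conjLinear_rankOne_eq_zero (hf : ContDiff ℝ 1 f)
    (hLA : ∀ x, HasWirtingerDerivAt f (L x) (A x) x) (a e : E) :
    ∫ x, (⟪x, e⟫_ℂ * ⟪e, x⟫_ℂ * L x a
      - ⟪x, a⟫_ℂ * (⟪x, e⟫_ℂ * A x e + f x * ‖e‖ ^ 2)) ∂μ = 0 := by
  rw [← integral_linear_sub_conjLinear_adjoint_eq_zero hK hμK hinv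
    (hf.mul (contDiff_id.inner ℂ contDiff_const))
    (fun x => (hLA x).mul (hasWirtingerDerivAt_inner_left e x)) (InnerProductSpace.rankOne ℂ a e)]
  congr with x
  simp only [InnerProductSpace.rankOne_apply, map_smul, add_apply,
    smul_apply, zero_apply, smul_eq_mul, mul_zero, zero_add,
    id_eq, ContinuousLinearMap.star_eq_adjoint, InnerProductSpace.adjoint_rankOne, map_smulₛₗ,
    inner_conj_symm, innerSLFlip_apply_apply, inner_self_eq_norm_sq_to_K, Complex.coe_algebraMap]
  ring

end UnitaryInvariance

section FiniteDimensional

variable {E : Type*} [NormedAddCommGroup E] [InnerProductSpace ℂ E] [FiniteDimensional ℂ E]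
  [MeasurableSpace E] [BorelSpace E] {μ : Measure E}

section CompactlySupported

variable [IsFiniteMeasure μ] {K : Set E} (hK : IsCompact K) (hμK : ∀ᵐ x ∂μ, x ∈ K)
  (hinv : ∀ U : E ≃ₗᵢ[ℂ] E, μ.map U = μ)

include hK hμK hinv

theorem finrank_mul_integral_mul_inner {g : E → ℂ} {L : E → E →L[ℂ] ℂ} {A : E → E →L⋆[ℂ] ℂ}
    (hg : ContDiff ℝ 1 g) (hLA : ∀ x, HasWirtingerDerivAt g (L x) (A x) x) (a : E) :
    Module.finrank ℂ E * ∫ x, g x * ⟪x, a⟫_ℂ ∂μ =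
      ∫ x, (‖x‖ ^ 2 * L x a - ⟪x, a⟫_ℂ * A x x) ∂μ := by
  have : CompleteSpace E := FiniteDimensional.complete ℂ E
  let e := stdOrthonormalBasis ℂ E
  have : Continuous g := hg.continuous
  have hL : Continuous fun x => L x a :=
    HasWirtingerDerivAt.continuous_linear_apply hg hLA continuous_const
  have hA_basis (j) : Continuous fun x => A x (e j) :=
    HasWirtingerDerivAt.continuous_conjLinear_apply hg hLA continuous_const
  have hA_self : Continuous fun x => A x x :=
    HasWirtingerDerivAt.continuous_conjLinear_apply hg hLA continuous_id
  have hint {h : E → ℂ} (hh : Continuous h) : Integrable h μ :=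
    integrable_of_continuous_of_ae_mem_isCompact hK hμK hh
  have hcont : Continuous fun x => ‖x‖ ^ 2 * L x a - ⟪x, a⟫_ℂ * A x x :=
    .sub (.mul (by fun_prop) hL) (.mul (by fun_prop) hA_self)
  have hA_sum (x : E) : ∑ j, ⟪x, e j⟫_ℂ * A x (e j) = A x x := by
    conv_rhs => rw [← congrArg (A x) (e.sum_repr' x)]
    simp
  have hsum (x : E) : ∑ j, (⟪x, e j⟫_ℂ * ⟪e j, x⟫_ℂ * L x a
        - ⟪x, a⟫_ℂ * (⟪x, e j⟫_ℂ * A x (e j) + g x * ‖e j‖ ^ 2)) =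
      (‖x‖ ^ 2 * L x a - ⟪x, a⟫_ℂ * A x x) - Module.finrank ℂ E * (g x * ⟪x, a⟫_ℂ) := by
    simp only [e.norm_eq_one, Complex.ofReal_one, one_pow, mul_one, Finset.sum_sub_distrib,
      ← Finset.sum_mul, ← Finset.mul_sum, Finset.sum_add_distrib, e.sum_inner_mul_inner,
      hA_sum, inner_self_eq_norm_sq_to_K, Finset.sum_const, Finset.card_univ, Fintype.card_fin,
      nsmul_eq_mul, Complex.coe_algebraMap]
    ring
  have hzero := Finset.sum_eq_zero fun j (_ : j ∈ Finset.univ) =>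
    integral_linear_rankOne_sub_conjLinear_rankOne_eq_zero hK hμK hinv hg hLA a (e j)
  rw [← integral_finsetSum _ fun j _ => hint (by fun_prop)] at hzero
  simp only [hsum] at hzero
  rw [integral_sub (hint hcont) (hint (by fun_prop)), integral_const_mul] at hzero
  exact (sub_eq_zero.mp hzero).symm

variable (S : Submodule ℂ E)

theorem finrank_mul_integral_pow_mul_inner_sq {a : E} (ha : a ∈ S) (n : ℕ) :
    Module.finrank ℂ E * ∫ x, (‖S.starProjection x‖ ^ 2) ^ n * ‖⟪a, x⟫_ℂ‖ ^ 2 ∂μ =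
      ∫ x, (‖x‖ ^ 2 * ((‖S.starProjection x‖ ^ 2) ^ n * ‖a‖ ^ 2
          + n * (‖S.starProjection x‖ ^ 2) ^ (n - 1) * ‖⟪a, x⟫_ℂ‖ ^ 2)
        - n * (‖S.starProjection x‖ ^ 2) ^ (n - 1) * ‖S.starProjection x‖ ^ 2
          * ‖⟪a, x⟫_ℂ‖ ^ 2) ∂μ := by
  have hproj : ContDiff ℝ 1 S.starProjection := S.starProjection.contDiff.restrict_scalars ℝ
  have hsmooth : ContDiff ℝ 1 fun x => (‖S.starProjection x‖ ^ 2 : ℂ) ^ n * ⟪a, x⟫_ℂ := by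
    refine .mul (.pow ?_ n) (contDiff_const.inner ℂ contDiff_id)
    exact_mod_cast Complex.ofRealCLM.contDiff.comp (hproj.norm_sq ℂ)
  have hstein := finrank_mul_integral_mul_inner hK hμK hinv hsmooth (fun x =>
    ((hasWirtingerDerivAt_norm_sq_map S.starProjection x).pow n).mul
      (hasWirtingerDerivAt_inner_right a x)) a
  have ha_proj : S.starProjection a = a := S.starProjection_eq_self_iff.mpr ha
  have hinner (x : E) : ⟪S.starProjection x, a⟫_ℂ = ⟪x, a⟫_ℂ := by
    rw [S.inner_starProjection_left_eq_right, ha_proj]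
  have hinner_sq (x : E) : (‖⟪a, x⟫_ℂ‖ : ℂ) ^ 2 = ⟪a, x⟫_ℂ * ⟪x, a⟫_ℂ := by
    rw [← inner_conj_symm x a, Complex.mul_conj']
  rw [← Complex.ofReal_inj, Complex.ofReal_mul, ← integral_complex_ofReal,
    ← integral_complex_ofReal]
  refine (congrArg _ (integral_congr_ae (.of_forall fun x => ?_))).trans
    (hstein.trans (integral_congr_ae (.of_forall fun x => ?_)))
  · push_cast
    rw [hinner_sq, mul_assoc]
  · push_cast
    simp only [coe_innerSL_apply, Pi.add_apply, Pi.smul_apply, Pi.zero_apply,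
      inner_self_eq_norm_sq_to_K, Complex.coe_algebraMap, smul_eq_mul, smul_zero, zero_add,
      Function.comp_apply, innerSLFlip_apply_apply, ha_proj, hinner, hinner_sq]
    ring

theorem finrank_add_mul_integral_norm_sq_pow_succ (n : ℕ) :
    (Module.finrank ℂ E + n : ℝ) * ∫ x, (‖S.starProjection x‖ ^ 2) ^ (n + 1) ∂μ =
      (Module.finrank ℂ S + n : ℝ) * ∫ x, ‖x‖ ^ 2 * (‖S.starProjection x‖ ^ 2) ^ n ∂μ := by
  let b := stdOrthonormalBasis ℂ S
  have hint {h : E → ℝ} (hh : Continuous h) : Integrable h μ :=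
    integrable_of_continuous_of_ae_mem_isCompact hK hμK hh
  have hb_norm (i) : ‖(b i : E)‖ = 1 := b.orthonormal.1 i
  have hb_sum (x : E) : ∑ i, ‖⟪(b i : E), x⟫_ℂ‖ ^ 2 = ‖S.starProjection x‖ ^ 2 := by
    simpa using b.sum_sq_norm_inner_right (S.orthogonalProjectionOnto x)
  have hpow (y : ℝ) : n * y ^ (n - 1) * y = n * y ^ n := by
    rcases n with _ | n
    · simp
    · rw [Nat.add_sub_cancel, pow_succ, mul_assoc]
  have hsum := Finset.sum_congr rfl fun i (_ : i ∈ Finset.univ) =>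
    finrank_mul_integral_pow_mul_inner_sq hK hμK hinv S (b i).2 n
  rw [← Finset.mul_sum, ← integral_finsetSum _ fun i _ => hint (by fun_prop),
    ← integral_finsetSum _ fun i _ => hint (by fun_prop)] at hsum
  simp only [hb_norm, one_pow, mul_one, hpow, Finset.sum_sub_distrib, Finset.sum_add_distrib,
    ← Finset.mul_sum, Finset.sum_const, Finset.card_univ, Fintype.card_fin, nsmul_eq_mul, hb_sum,
    ← pow_succ] at hsum
  have hsplit (x : E) : ‖x‖ ^ 2 * (Module.finrank ℂ S * (‖S.starProjection x‖ ^ 2) ^ n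
        + n * (‖S.starProjection x‖ ^ 2) ^ n)
          - n * (‖S.starProjection x‖ ^ 2) ^ n * ‖S.starProjection x‖ ^ 2 =
      (Module.finrank ℂ S + n) * (‖x‖ ^ 2 * (‖S.starProjection x‖ ^ 2) ^ n)
        - n * (‖S.starProjection x‖ ^ 2) ^ (n + 1) := by ring
  simp only [hsplit] at hsum
  rw [integral_sub (hint (by fun_prop)) (hint (by fun_prop)), integral_const_mul,
    integral_const_mul] at hsum
  linear_combination hsum

end CompactlySupported

theorem integral_norm_starProjection_pow [IsProbabilityMeasure μ] (hsph : ∀ᵐ x ∂μ, ‖x‖ = 1)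
    (hinv : ∀ U : E ≃ₗᵢ[ℂ] E, μ.map U = μ) (S : Submodule ℂ E) (t : ℕ) :
    ∫ x, ‖S.starProjection x‖ ^ (2 * t) ∂μ =
      ((Module.finrank ℂ S).ascFactorial t : ℝ) / (Module.finrank ℂ E).ascFactorial t := by
  have hμK : ∀ᵐ x ∂μ, x ∈ Metric.sphere (0 : E) 1 := by simpa using hsph
  have hK : IsCompact (Metric.sphere (0 : E) 1) :=
    have := FiniteDimensional.proper ℂ E
    isCompact_sphere 0 1
  have hd : 0 < Module.finrank ℂ E := by
    obtain ⟨x, hx⟩ := hsph.exists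
    have : Nontrivial E := ⟨x, 0, fun h => by simp [h] at hx⟩
    exact Module.finrank_pos
  simp only [pow_mul]
  induction t with
  | zero => simp
  | succ n ih =>
    have hrec := finrank_add_mul_integral_norm_sq_pow_succ hK hμK hinv S n
    have hsph_pow : ∫ x, ‖x‖ ^ 2 * (‖S.starProjection x‖ ^ 2) ^ n ∂μ
        = ∫ x, (‖S.starProjection x‖ ^ 2) ^ n ∂μ :=
      integral_congr_ae (hsph.mono fun x hx => by simp [hx])
    rw [hsph_pow, ih] at hrec
    rw [Nat.ascFactorial_succ, Nat.ascFactorial_succ]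
    push_cast
    rw [mul_div_mul_comm, div_mul_eq_mul_div, ← hrec, mul_div_cancel_left₀ _ (by positivity)]

end FiniteDimensional

/-- For `φ` Haar-random on the unit sphere of a `d`-dimensional complex Hilbert
space and `P` an orthogonal projection of rank `M`,
`E[‖Pφ‖^{2t}] = (M+t-1)⋯M / ((d+t-1)⋯d) = C(M+t-1,t)/C(d+t-1,t)`. -/
theorem haar_moment_proj {E : Type*} [NormedAddCommGroup E] [InnerProductSpace ℂ E]
    [FiniteDimensional ℂ E] [MeasurableSpace E] [BorelSpace E]
    (μ : Measure E) [IsProbabilityMeasure μ]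
    (hsph : ∀ᵐ x ∂μ, ‖x‖ = 1)
    (hinv : ∀ U : E ≃ₗᵢ[ℂ] E, μ.map U = μ)
    (P : E →ₗ[ℂ] E) (hidem : ∀ x, P (P x) = P x)
    (hsym : ∀ x y, ⟪P x, y⟫_ℂ = ⟪x, P y⟫_ℂ)
    (M d t : ℕ) (ht : 1 ≤ t)
    (hrank : Module.finrank ℂ (LinearMap.range P) = M)
    (hd : Module.finrank ℂ E = d) :
    ∫ x, ‖P x‖ ^ (2 * t) ∂μ =
        (∏ k ∈ Finset.range t, ((M : ℝ) + k)) / (∏ k ∈ Finset.range t, ((d : ℝ) + k)) ∧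
      ∫ x, ‖P x‖ ^ (2 * t) ∂μ =
        ((M + t - 1).choose t : ℝ) / ((d + t - 1).choose t : ℝ) := by
  have hP : P.IsSymmetricProjection := ⟨LinearMap.ext hidem, hsym⟩
  obtain ⟨_, hP_eq⟩ := LinearMap.isSymmetricProjection_iff_eq_coe_starProjection_range.mp hP
  have hmoment : ∫ x, ‖P x‖ ^ (2 * t) ∂μ = (M.ascFactorial t : ℝ) / d.ascFactorial t := by
    rw [← hrank, ← hd, ← integral_norm_starProjection_pow hsph hinv]
    congr with x
    rw [LinearMap.congr_fun hP_eq x, ContinuousLinearMap.coe_coe]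
  rw [hmoment]
  constructor
  · simp [Nat.ascFactorial_eq_prod_range]
  · have ht0 : (t.factorial : ℝ) ≠ 0 := by positivity
    simp only [Nat.ascFactorial_eq_factorial_mul_choose', Nat.cast_mul, mul_div_mul_left _ _ ht0]
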